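/- arXiv:1707.01156 — 2 statements merged into one kernel-verified Lean document; each statement's English description precedes it below -/
import Mathlib

section
/- Let K = ℂ(V) be the fraction field of A, with the induced Γ-action. Inside the ℂ-algebra End_ℂ(K), let S be the ℂ-subalgebra generated by the multiplication operators by elements of K together with the action operators of the elements of Γ (so S is the image of the smash product Γ # K). Then the ℂ-subalgebra of End_ℂ(K) generated by the multiplication operators by elements of A together with the operators D_i : K → K, D_i(f) = α_i^{-1}·(f − s_i(f)), for i = 1, …, n, is equal to { x ∈ S : x(A) ⊆ A }, the largest subalgebra of S stabilizing A. -/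
open scoped TensorProduct

noncomputable section

abbrev Vd (d : ℕ) := Fin d → ℂ
abbrev Ad (d : ℕ) := MvPolynomial (Fin d) ℂ

/-- Action of `g ∈ GL(V)` on polynomials: substitute `X j ↦ (g⁻¹ x)_j`. -/
def glAct {d : ℕ} (g : GL (Fin d) ℂ) : Ad d →ₐ[ℂ] Ad d :=
  MvPolynomial.aeval fun j =>
    ∑ k, ((g⁻¹ : GL (Fin d) ℂ) : Matrix (Fin d) (Fin d) ℂ) j k • MvPolynomial.X k

/-- Embedding of linear forms on `V` as degree-one polynomials. -/
def lin {d : ℕ} (θ : Vd d →ₗ[ℂ] ℂ) : Ad d :=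
  ∑ j, θ (Pi.single j 1) • MvPolynomial.X j

structure CoxeterSetup (d n : ℕ) where
  Γ : Subgroup (GL (Fin d) ℂ)
  finite : Finite Γ
  s : Fin n → Γ
  gen : Subgroup.closure (Set.range s) = (⊤ : Subgroup Γ)
  α : Fin n → (Vd d →ₗ[ℂ] ℂ)
  coroot : Fin n → Vd d
  pairing : ∀ i, α i (coroot i) = 2
  refl : ∀ i (v : Vd d),
    ((s i : GL (Fin d) ℂ) : Matrix (Fin d) (Fin d) ℂ).mulVec v = v - α i v • coroot i


/-- The subalgebra of `Γ'`-invariant polynomials. -/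
def FixedSub {d n : ℕ} (S : CoxeterSetup d n) (Γ' : Subgroup S.Γ) : Subalgebra ℂ (Ad d) where
  carrier := {f | ∀ g ∈ Γ', glAct (g : GL (Fin d) ℂ) f = f}
  mul_mem' := fun hf hg g hgmem => by simp [map_mul, hf g hgmem, hg g hgmem]
  add_mem' := fun hf hg g hgmem => by simp [map_add, hf g hgmem, hg g hgmem]
  algebraMap_mem' := fun c g _ => by simp

/-- `M` (with `Γ'`-action `ρ`) descends to `A^{Γ'}`. -/
def Descends {d n : ℕ} (S : CoxeterSetup d n) (Γ' : Subgroup S.Γ) (M : Type)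
    [AddCommGroup M] [Module ℂ M] [Module (Ad d) M] [IsScalarTower ℂ (Ad d) M]
    (ρ : Γ' →* Module.End ℂ M) : Prop :=
  ∃ (N : Type) (_ : AddCommGroup N) (_ : Module (FixedSub S Γ') N)
    (e : ((Ad d) ⊗[FixedSub S Γ'] N) ≃ₗ[Ad d] M),
    ∀ (g : Γ') (a : Ad d) (x : N),
      ρ g (e (a ⊗ₜ x)) = e ((glAct ((g : S.Γ) : GL (Fin d) ℂ) a) ⊗ₜ x)


open MvPolynomial in
lemma glAct_X {d : ℕ} (g : GL (Fin d) ℂ) (j : Fin d) :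
    glAct g (X j) = ∑ k, ((g⁻¹ : GL (Fin d) ℂ) : Matrix (Fin d) (Fin d) ℂ) j k • X k := by
  simp [glAct]

open MvPolynomial in
lemma glAct_one {d : ℕ} (f : Ad d) : glAct (1 : GL (Fin d) ℂ) f = f := by
  have : glAct (1 : GL (Fin d) ℂ) = AlgHom.id ℂ (Ad d) := by
    apply MvPolynomial.algHom_ext
    intro j
    rw [glAct_X]
    simp [Matrix.one_apply, ite_smul]
  rw [this]; rfl

open MvPolynomial in
lemma glAct_mul {d : ℕ} (g h : GL (Fin d) ℂ) (f : Ad d) :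
    glAct (g * h) f = glAct g (glAct h f) := by
  have : glAct (g * h) = (glAct g).comp (glAct h) := by
    apply MvPolynomial.algHom_ext
    intro j
    rw [AlgHom.comp_apply, glAct_X, glAct_X, map_sum]
    simp only [map_smul, glAct_X, mul_inv_rev, Units.val_mul, Matrix.mul_apply, Finset.sum_smul,
      Finset.smul_sum, smul_smul]
    rw [Finset.sum_comm]
  rw [this]; rfl

open MvPolynomial in
lemma glAct_deg {d : ℕ} (g : GL (Fin d) ℂ) (f : Ad d) :
    (glAct g f).totalDegree ≤ f.totalDegree := by
  conv_lhs => rw [f.as_sum, map_sum]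
  apply totalDegree_finsetSum_le
  intro m hm
  rw [glAct, aeval_monomial]
  refine (totalDegree_mul _ _).trans ?_
  rw [algebraMap_eq, totalDegree_C, zero_add, Finsupp.prod]
  refine (totalDegree_finsetProd _ _).trans ?_
  refine le_trans ?_ (le_totalDegree hm)
  rw [Finsupp.sum]
  apply Finset.sum_le_sum
  intro j _
  refine (totalDegree_pow _ _).trans ?_
  have : (∑ k, ((g⁻¹ : GL (Fin d) ℂ) : Matrix (Fin d) (Fin d) ℂ) j k •
      (X k : Ad d)).totalDegree ≤ 1 := by
    apply totalDegree_finsetSum_le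
    intro k _
    exact (totalDegree_smul_le _ _).trans (totalDegree_X k).le
  nlinarith

lemma eval_lin {d : ℕ} (θ : Vd d →ₗ[ℂ] ℂ) (v : Vd d) : MvPolynomial.eval v (lin θ) = θ v := by
  rw [lin, map_sum]
  conv_rhs => rw [LinearMap.pi_apply_eq_sum_univ θ v]
  apply Finset.sum_congr rfl
  intro j _
  simp only [MvPolynomial.smul_eval, MvPolynomial.eval_X, smul_eq_mul, mul_comm]
  congr 2
  ext k
  simp [Pi.single_apply, eq_comm]

namespace CoxeterSetup
variable {d n : ℕ} (S : CoxeterSetup d n)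

lemma lin_ne (i : Fin n) : lin (S.α i) ≠ 0 := by
  intro h
  have := eval_lin (S.α i) (S.coroot i)
  rw [h, S.pairing] at this
  simp at this

lemma lin_deg (i : Fin n) : 1 ≤ (lin (S.α i)).totalDegree := by
  by_contra h
  have h0 : (lin (S.α i)).totalDegree = 0 := by omega
  rw [MvPolynomial.totalDegree_eq_zero_iff_eq_C] at h0
  have h1 := eval_lin (S.α i) 0
  rw [h0] at h1
  simp at h1
  rw [h1] at h0
  exact S.lin_ne i (by simpa using h0)

lemma lin_deg_le {d : ℕ} (θ : Vd d →ₗ[ℂ] ℂ) : (lin θ).totalDegree ≤ 1 := by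
  apply MvPolynomial.totalDegree_finsetSum_le
  intro k _
  exact (MvPolynomial.totalDegree_smul_le _ _).trans (MvPolynomial.totalDegree_X k).le

lemma s_inv (i : Fin n) : ((S.s i : GL (Fin d) ℂ))⁻¹ = (S.s i : GL (Fin d) ℂ) := by
  rw [inv_eq_iff_mul_eq_one]
  apply Units.ext
  rw [Units.val_mul, Units.val_one, Matrix.ext_iff_mulVec]
  intro v
  rw [← Matrix.mulVec_mulVec, S.refl, S.refl, map_sub, map_smul, S.pairing, Matrix.one_mulVec]
  ext j
  simp
  ring

lemma s_X (i : Fin n) (j : Fin d) :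
    glAct (S.s i : GL (Fin d) ℂ) (MvPolynomial.X j) =
      MvPolynomial.X j - S.coroot i j • lin (S.α i) := by
  rw [glAct_X, S.s_inv]
  have key : ∀ k, ((S.s i : GL (Fin d) ℂ) : Matrix (Fin d) (Fin d) ℂ) j k =
      (if j = k then 1 else 0) - S.coroot i j * S.α i (Pi.single k 1) := by
    intro k
    have := congrFun (S.refl i (Pi.single k 1)) j
    rw [Matrix.mulVec_single_one] at this
    simp [Pi.single_apply] at this
    rw [this]; ring
  simp only [key, sub_smul, Finset.sum_sub_distrib, ite_smul, lin, Finset.smul_sum, smul_smul]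
  simp

lemma dvd (i : Fin n) (f : Ad d) : lin (S.α i) ∣ f - glAct (S.s i : GL (Fin d) ℂ) f := by
  rw [← Ideal.mem_span_singleton, ← Ideal.Quotient.eq]
  have : (Ideal.Quotient.mkₐ ℂ (Ideal.span {lin (S.α i)})) =
      (Ideal.Quotient.mkₐ ℂ (Ideal.span {lin (S.α i)})).comp (glAct (S.s i : GL (Fin d) ℂ)) := by
    apply MvPolynomial.algHom_ext
    intro j
    simp only [AlgHom.comp_apply, Ideal.Quotient.mkₐ_eq_mk]
    rw [Ideal.Quotient.eq, s_X, Ideal.mem_span_singleton, sub_sub_cancel]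
    rw [MvPolynomial.smul_eq_C_mul]; exact dvd_mul_left _ _
  exact congrArg (fun φ => φ f) this

def dem (i : Fin n) : Ad d →ₗ[ℂ] Ad d where
  toFun f := (S.dvd i f).choose
  map_add' f g := by
    apply mul_left_cancel₀ (S.lin_ne i)
    rw [mul_add, ← (S.dvd i (f+g)).choose_spec, ← (S.dvd i f).choose_spec,
      ← (S.dvd i g).choose_spec, map_add]
    ring
  map_smul' c f := by
    apply mul_left_cancel₀ (S.lin_ne i)
    rw [RingHom.id_apply, mul_smul_comm, ← (S.dvd i (c • f)).choose_spec, ← (S.dvd i f).choose_spec,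
      map_smul, smul_sub]

lemma dem_spec (i : Fin n) (f : Ad d) :
    lin (S.α i) * S.dem i f = f - glAct (S.s i : GL (Fin d) ℂ) f :=
  (S.dvd i f).choose_spec.symm

lemma dem_deg (i : Fin n) (f : Ad d) (k : ℕ) (h : f.totalDegree ≤ k + 1) :
    (S.dem i f).totalDegree ≤ k := by
  by_cases h0 : S.dem i f = 0
  · simp [h0]
  have h1 := MvPolynomial.totalDegree_mul_of_isDomain (S.lin_ne i) h0
  rw [dem_spec] at h1
  have h2 := MvPolynomial.totalDegree_sub f (glAct (S.s i : GL (Fin d) ℂ) f)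
  have h3 := glAct_deg (S.s i : GL (Fin d) ℂ) f
  have h4 := S.lin_deg i
  rw [max_eq_left h3] at h2
  omega

def word : (k : ℕ) → (Fin k → Fin n) → (Ad d →ₗ[ℂ] Ad d)
  | 0, _ => LinearMap.id
  | k + 1, w => word k (Fin.tail w) ∘ₗ S.dem (w 0)

lemma word_deg (k : ℕ) (w : Fin k → Fin n) (f : Ad d) (h : f.totalDegree ≤ k) :
    (S.word k w f).totalDegree = 0 := by
  induction k generalizing f with
  | zero => simpa [word] using h
  | succ k ih => exact ih _ _ (S.dem_deg _ _ _ h)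

@[reducible] def act : MulSemiringAction S.Γ (Ad d) where
  smul g f := glAct (g : GL (Fin d) ℂ) f
  one_smul f := glAct_one f
  mul_smul g h f := glAct_mul _ _ f
  smul_zero g := map_zero _
  smul_add g := map_add _
  smul_one g := map_one _
  smul_mul g := map_mul _

abbrev B := FixedSub S ⊤

lemma B_fix (b : S.B) (g : S.Γ) : glAct (g : GL (Fin d) ℂ) (b : Ad d) = b := b.2 g trivial

lemma fin : Module.Finite S.B (Ad d) := by
  let := S.act
  have := S.finite
  have : SMulCommClass S.Γ S.B (Ad d) := ⟨fun g b f => by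
    change glAct (g : GL (Fin d) ℂ) ((b : Ad d) * f) = (b : Ad d) * glAct (g : GL (Fin d) ℂ) f
    rw [map_mul, B_fix]⟩
  have : Algebra.IsInvariant S.B (Ad d) S.Γ := ⟨fun f hf => ⟨⟨f, fun g _ => hf g⟩, rfl⟩⟩
  have : Algebra.IsIntegral S.B (Ad d) := Algebra.IsInvariant.isIntegral S.B (Ad d) S.Γ
  have : Algebra.FiniteType S.B (Ad d) := Algebra.FiniteType.of_restrictScalars_finiteType ℂ _ _
  exact Algebra.IsIntegral.finite

def M (k : ℕ) : Submodule S.B (Ad d) := Submodule.span S.B {a | a.totalDegree < k}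

lemma M_top : ∃ k, S.M k = ⊤ := by
  obtain ⟨s, hs⟩ := S.fin
  refine ⟨s.sup MvPolynomial.totalDegree + 1, ?_⟩
  rw [eq_top_iff, ← hs]
  apply Submodule.span_mono
  intro a ha
  exact Nat.lt_succ_of_le (Finset.le_sup (f := MvPolynomial.totalDegree) ha)

lemma M_act (k : ℕ) (g : S.Γ) (f : Ad d) (hf : f ∈ S.M k) :
    glAct (g : GL (Fin d) ℂ) f ∈ S.M k := by
  induction hf using Submodule.span_induction with
  | mem a ha => exact Submodule.subset_span (lt_of_le_of_lt (glAct_deg _ _) ha)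
  | zero => rw [map_zero]; exact zero_mem _
  | add a b _ _ ha hb => rw [map_add]; exact add_mem ha hb
  | smul b a _ ha =>
    rw [Subalgebra.smul_def, smul_eq_mul, map_mul, B_fix]
    exact (S.M k).smul_mem b ha

lemma M_mul (k : ℕ) (i : Fin n) (f : Ad d) (hf : f ∈ S.M k) :
    lin (S.α i) * f ∈ S.M (k + 1) := by
  induction hf using Submodule.span_induction with
  | mem a ha =>
    apply Submodule.subset_span
    have h1 := MvPolynomial.totalDegree_mul (lin (S.α i)) a
    have h2 := lin_deg_le (S.α i)
    change a.totalDegree < k at ha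
    change (lin (S.α i) * a).totalDegree < k + 1
    omega
  | zero => rw [mul_zero]; exact zero_mem _
  | add a b _ _ ha hb => rw [mul_add]; exact add_mem ha hb
  | smul b a _ ha =>
    rw [mul_smul_comm]
    exact (S.M (k+1)).smul_mem b ha

lemma B_mem (k : ℕ) (b : S.B) : (b : Ad d) ∈ S.M (k + 1) := by
  have : (1 : Ad d) ∈ S.M (k + 1) := Submodule.subset_span (by simp)
  simpa [Subalgebra.smul_def] using (S.M (k+1)).smul_mem b this

lemma sum_fix [Fintype S.Γ] (f : Ad d) :
    ∑ g : S.Γ, glAct (g : GL (Fin d) ℂ) f ∈ S.B := by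
  intro h _
  rw [map_sum]
  simp only [← glAct_mul]
  exact Fintype.sum_equiv (Equiv.mulLeft h) _ _ (fun g => rfl)

lemma prod_fix [Fintype S.Γ] (f : Ad d) :
    ∏ g : S.Γ, glAct (g : GL (Fin d) ℂ) f ∈ S.B := by
  intro h _
  rw [map_prod]
  simp only [← glAct_mul]
  exact Fintype.prod_equiv (Equiv.mulLeft h) _ _ (fun g => rfl)

lemma sub_mem_M (k : ℕ) (f : Ad d)
    (h : ∀ i, f - glAct (S.s i : GL (Fin d) ℂ) f ∈ S.M k) (g : S.Γ) :
    f - glAct (g : GL (Fin d) ℂ) f ∈ S.M k := by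
  have hg : g ∈ Subgroup.closure (Set.range S.s) := by rw [S.gen]; trivial
  induction hg using Subgroup.closure_induction with
  | mem x hx => obtain ⟨i, rfl⟩ := hx; exact h i
  | one => rw [OneMemClass.coe_one, glAct_one, sub_self]; exact zero_mem _
  | mul x y _ _ hx hy =>
    have := add_mem hx (S.M_act k x _ hy)
    rw [map_sub, ← glAct_mul] at this
    simpa using this
  | inv x _ hx =>
    have := S.M_act k x⁻¹ _ hx
    rw [map_sub, ← glAct_mul] at this
    rw [← Subgroup.coe_mul, inv_mul_cancel, OneMemClass.coe_one, glAct_one] at this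
    rw [← neg_sub]
    exact neg_mem this

lemma key (k : ℕ) (f : Ad d) (hf : f.totalDegree ≤ k) (h : ∀ w, S.word k w f = 0) :
    f ∈ S.M k := by
  induction k generalizing f with
  | zero =>
    have : f = 0 := h Fin.elim0
    rw [this]; exact zero_mem _
  | succ k ih =>
    have h1 : ∀ i, f - glAct (S.s i : GL (Fin d) ℂ) f ∈ S.M (k + 1) := by
      intro i
      rw [← dem_spec]
      apply M_mul
      apply ih _ (S.dem_deg i f k hf)
      intro w
      have := h (Fin.cons i w)
      simpa [word] using this
    have h2 := S.sub_mem_M _ f h1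
    have := S.finite
    have := Fintype.ofFinite S.Γ
    have h3 : ∑ g : S.Γ, (f - glAct (g : GL (Fin d) ℂ) f) ∈ S.M (k+1) :=
      sum_mem fun g _ => h2 g
    have h4 := add_mem h3 (S.B_mem k ⟨_, S.sum_fix f⟩)
    rw [Finset.sum_sub_distrib] at h4
    simp only [sub_add_cancel] at h4
    rw [Finset.sum_const, ← Nat.cast_smul_eq_nsmul ℂ] at h4
    have h5 := ((S.M (k+1)).restrictScalars ℂ).smul_mem ((Finset.univ : Finset S.Γ).card : ℂ)⁻¹ h4
    rw [smul_smul, inv_mul_cancel₀, one_smul] at h5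
    · exact h5
    · simp

lemma factor (k : ℕ) (y : Ad d →ₗ[ℂ] Ad d) (hB : ∀ (b : S.B) f, y (b * f) = b * y f)
    (hy : ∀ f : Ad d, f.totalDegree < k → y f = 0) :
    ∃ a : (Fin k → Fin n) → Ad d, ∀ f : Ad d, f.totalDegree ≤ k →
      y f = ∑ w, a w * S.word k w f := by
  have hM : ∀ f ∈ S.M k, y f = 0 := by
    intro f hf
    induction hf using Submodule.span_induction with
    | mem a ha => exact hy a ha
    | zero => exact map_zero _
    | add a b _ _ ha hb => rw [map_add, ha, hb, add_zero]
    | smul b a _ ha => rw [Subalgebra.smul_def, smul_eq_mul, hB, ha, mul_zero]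
  let F := MvPolynomial.restrictTotalDegree (Fin d) ℂ k
  let L : F →ₗ[ℂ] ((Fin k → Fin n) → ℂ) :=
    LinearMap.pi fun w => (MvPolynomial.lcoeff ℂ 0) ∘ₗ S.word k w ∘ₗ F.subtype
  have hL : ∀ (f : F) w, S.word k w f = MvPolynomial.C (L f w) := by
    intro f w
    exact MvPolynomial.totalDegree_eq_zero_iff_eq_C.1
      (S.word_deg k w f ((MvPolynomial.mem_restrictTotalDegree _ _ _).1 f.2))
  have hker : LinearMap.ker L ≤ LinearMap.ker (y ∘ₗ F.subtype) := by
    intro f hf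
    rw [LinearMap.mem_ker] at hf ⊢
    apply hM
    apply S.key k f ((MvPolynomial.mem_restrictTotalDegree _ _ _).1 f.2)
    intro w
    rw [hL, hf]; simp
  obtain ⟨T, hT⟩ := LinearMap.exists_extend
    ((LinearMap.ker L).liftQ (y ∘ₗ F.subtype) hker ∘ₗ L.quotKerEquivRange.symm.toLinearMap)
  have hT' : ∀ f : F, y f = T (L f) := by
    intro f
    have := LinearMap.congr_fun hT ⟨L f, LinearMap.mem_range_self L f⟩
    simp only [LinearMap.comp_apply, Submodule.subtype_apply] at this
    rw [this]
    have h2 : L.quotKerEquivRange.symm ⟨L f, LinearMap.mem_range_self L f⟩ =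
        (LinearMap.ker L).mkQ f := by
      rw [LinearEquiv.symm_apply_eq]; rfl
    simp [h2]
  refine ⟨fun w => T (Pi.single w 1), fun f hf => ?_⟩
  have hf' := hT' ⟨f, (MvPolynomial.mem_restrictTotalDegree _ _ _).2 hf⟩
  have hw := hL ⟨f, (MvPolynomial.mem_restrictTotalDegree _ _ _).2 hf⟩
  simp only at hf' hw
  rw [hf', LinearMap.pi_apply_eq_sum_univ T]
  apply Finset.sum_congr rfl
  intro w _
  rw [hw, mul_comm, MvPolynomial.smul_eq_C_mul]
  congr 2
  ext k
  simp [Pi.single_apply, eq_comm]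

end CoxeterSetup

/-- Inside `End_ℂ(K)` for `K = ℂ(V)` the fraction field of `A` (with its
induced `Γ`-action `ψ`), the subalgebra generated by multiplication by elements of `A`
together with the Demazure operators `Dᵢ = αᵢ⁻¹·(1 − sᵢ)` equals the set of elements of the
image `S` of the smash product `Γ # K` which stabilize `A`. -/
theorem nilHecke_eq_stabilizer_of_smash {d n : ℕ} (S : CoxeterSetup d n)
    (ψ : S.Γ →* (FractionRing (Ad d) ≃ₐ[ℂ] FractionRing (Ad d)))
    (hψ : ∀ (g : S.Γ) (f : Ad d),
      ψ g (algebraMap (Ad d) (FractionRing (Ad d)) f) =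
        algebraMap (Ad d) (FractionRing (Ad d)) (glAct (g : GL (Fin d) ℂ) f)) :
    ∀ x : Module.End ℂ (FractionRing (Ad d)),
      (x ∈ Algebra.adjoin ℂ
          ((Set.range fun f : Ad d =>
              (LinearMap.mulLeft ℂ (algebraMap (Ad d) (FractionRing (Ad d)) f) :
                Module.End ℂ (FractionRing (Ad d)))) ∪
            (Set.range fun i : Fin n =>
              (LinearMap.mulLeft ℂ
                  ((algebraMap (Ad d) (FractionRing (Ad d)) (lin (S.α i)))⁻¹) :
                Module.End ℂ (FractionRing (Ad d))) *
              (1 - (ψ (S.s i)).toLinearMap)))) ↔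
      (x ∈ Algebra.adjoin ℂ
          ((Set.range fun y : FractionRing (Ad d) =>
              (LinearMap.mulLeft ℂ y : Module.End ℂ (FractionRing (Ad d)))) ∪
            (Set.range fun g : S.Γ =>
              ((ψ g).toLinearMap : Module.End ℂ (FractionRing (Ad d))))) ∧
        ∀ f : Ad d, ∃ q : Ad d,
          x (algebraMap (Ad d) (FractionRing (Ad d)) f) =
            algebraMap (Ad d) (FractionRing (Ad d)) q) := by
  classical
  set K := FractionRing (Ad d) with hK
  set ι := algebraMap (Ad d) K with hι
  have hinj : Function.Injective ι := IsFractionRing.injective (Ad d) K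
  set gH := ((Set.range fun f : Ad d => (LinearMap.mulLeft ℂ (ι f) : Module.End ℂ K)) ∪
            (Set.range fun i : Fin n =>
              (LinearMap.mulLeft ℂ ((ι (lin (S.α i)))⁻¹) : Module.End ℂ K) *
              (1 - (ψ (S.s i)).toLinearMap))) with hgH
  set gS := ((Set.range fun y : K => (LinearMap.mulLeft ℂ y : Module.End ℂ K)) ∪
            (Set.range fun g : S.Γ => ((ψ g).toLinearMap : Module.End ℂ K))) with hgS
  have hD : ∀ i f, ((LinearMap.mulLeft ℂ ((ι (lin (S.α i)))⁻¹) : Module.End ℂ K) *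
      (1 - (ψ (S.s i)).toLinearMap)) (ι f) = ι (S.dem i f) := by
    intro i f
    have h0 : ι (lin (S.α i)) ≠ 0 := by
      rw [Ne, map_eq_zero_iff ι hinj]; exact S.lin_ne i
    have h1 := congrArg ι (S.dem_spec i f)
    rw [map_mul, map_sub, ← hψ] at h1
    change (ι (lin (S.α i)))⁻¹ * (ι f - ψ (S.s i) (ι f)) = _
    rw [← h1, inv_mul_cancel_left₀ h0]
  have hHS : Algebra.adjoin ℂ gH ≤ Algebra.adjoin ℂ gS := by
    rw [Algebra.adjoin_le_iff]
    rintro x (⟨f, rfl⟩ | ⟨i, rfl⟩)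
    · exact Algebra.subset_adjoin (Or.inl ⟨_, rfl⟩)
    · exact mul_mem (Algebra.subset_adjoin (Or.inl ⟨_, rfl⟩))
        (sub_mem (one_mem _) (Algebra.subset_adjoin (Or.inr ⟨_, rfl⟩)))
  have hHA : ∀ x ∈ Algebra.adjoin ℂ gH, ∀ f : Ad d, ∃ q : Ad d, x (ι f) = ι q := by
    intro x hx
    induction hx using Algebra.adjoin_induction with
    | mem x hx =>
      rcases hx with ⟨f, rfl⟩ | ⟨i, rfl⟩
      · exact fun g => ⟨f * g, (map_mul ι f g).symm⟩
      · exact fun f => ⟨_, hD i f⟩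
    | algebraMap r =>
      intro f
      refine ⟨r • f, ?_⟩
      rw [Module.algebraMap_end_apply, Algebra.smul_def, Algebra.smul_def, map_mul,
        IsScalarTower.algebraMap_apply ℂ (Ad d) K]
    | add x y _ _ hx hy =>
      intro f
      obtain ⟨p, hp⟩ := hx f
      obtain ⟨q, hq⟩ := hy f
      exact ⟨p + q, by rw [LinearMap.add_apply, hp, hq, map_add]⟩
    | mul x y _ _ hx hy =>
      intro f
      obtain ⟨q, hq⟩ := hy f
      obtain ⟨p, hp⟩ := hx q
      exact ⟨p, by rw [Module.End.mul_apply, hq, hp]⟩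
  have hSB : ∀ x ∈ Algebra.adjoin ℂ gS, ∀ (b : S.B) (k : K), x (ι b * k) = ι b * x k := by
    intro x hx
    induction hx using Algebra.adjoin_induction with
    | mem x hx =>
      rcases hx with ⟨y, rfl⟩ | ⟨g, rfl⟩
      · intro b k
        exact mul_left_comm _ _ _
      · intro b k
        change ψ g (ι b * k) = ι b * ψ g k
        rw [map_mul, hψ, S.B_fix]
    | algebraMap r =>
      intro b k
      rw [Module.algebraMap_end_apply, Module.algebraMap_end_apply, mul_smul_comm]
    | add x y _ _ hx hy =>
      intro b k
      rw [LinearMap.add_apply, hx, hy, LinearMap.add_apply, mul_add]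
    | mul x y _ _ hx hy =>
      intro b k
      rw [Module.End.mul_apply, hy, hx, Module.End.mul_apply]
  have hword : ∀ (k : ℕ) (w : Fin k → Fin n), ∃ h ∈ Algebra.adjoin ℂ gH,
      ∀ f, h (ι f) = ι (S.word k w f) := by
    intro k
    induction k with
    | zero => exact fun w => ⟨1, one_mem _, fun f => rfl⟩
    | succ k ih =>
      intro w
      obtain ⟨h, hh, hf⟩ := ih (Fin.tail w)
      refine ⟨h * _, mul_mem hh (Algebra.subset_adjoin (Or.inr ⟨w 0, rfl⟩)), fun f => ?_⟩
      rw [Module.End.mul_apply, hD, hf]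
      rfl
  intro x
  refine ⟨fun hx => ⟨hHS hx, hHA x hx⟩, ?_⟩
  rintro ⟨hxS, hxA⟩
  have hstep : ∀ k : ℕ, ∃ h ∈ Algebra.adjoin ℂ gH, ∀ f : Ad d, f.totalDegree < k →
      (x - h) (ι f) = 0 := by
    intro k
    induction k with
    | zero => exact ⟨0, zero_mem _, fun f hf => absurd hf (Nat.not_lt_zero _)⟩
    | succ k ih =>
      obtain ⟨h, hh, hf⟩ := ih
      have hA : ∀ f : Ad d, ∃ q : Ad d, (x - h) (ι f) = ι q := by
        intro f
        obtain ⟨p, hp⟩ := hxA f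
        obtain ⟨q, hq⟩ := hHA h hh f
        exact ⟨p - q, by rw [LinearMap.sub_apply, hp, hq, map_sub]⟩
      have hxB := hSB _ (sub_mem hxS (hHS hh))
      choose q hq using hA
      have hsm : ∀ (c : ℂ) (f : Ad d), ι (c • f) = c • ι f := by
        intro c f
        rw [Algebra.smul_def, Algebra.smul_def, map_mul,
          IsScalarTower.algebraMap_apply ℂ (Ad d) K]
      let y : Ad d →ₗ[ℂ] Ad d :=
        { toFun := q
          map_add' := fun f g => hinj (by rw [← hq, map_add, map_add, map_add, hq, hq])
          map_smul' := fun c f => hinj (by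
            rw [← hq, RingHom.id_apply, hsm, hsm, map_smul, hq]) }
      obtain ⟨a, ha⟩ := S.factor k y
        (fun b f => hinj (by
          change ι (q _) = ι (_ * q f)
          rw [← hq, map_mul ι, map_mul ι, hxB, hq]))
        (fun f hlt => hinj (by
          change ι (q f) = _
          rw [← hq, hf f hlt, map_zero]))
      choose W hWH hW using hword k
      refine ⟨h + ∑ w, (LinearMap.mulLeft ℂ (ι (a w)) : Module.End ℂ K) * W w,
        add_mem hh (sum_mem fun w _ => mul_mem (Algebra.subset_adjoin (Or.inl ⟨_, rfl⟩)) (hWH w)),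
        fun f hlt => ?_⟩
      rw [← sub_sub, LinearMap.sub_apply, hq, sub_eq_zero]
      have h1 := congrArg ι (ha f (Nat.lt_succ_iff.1 hlt))
      change ι (q f) = _ at h1
      rw [h1, LinearMap.sum_apply, map_sum]
      apply Finset.sum_congr rfl
      intro w _
      rw [Module.End.mul_apply, hW, LinearMap.mulLeft_apply, map_mul]
  obtain ⟨k, hk⟩ := S.M_top
  obtain ⟨h, hh, hf⟩ := hstep k
  have hxB := hSB _ (sub_mem hxS (hHS hh))
  have hz : ∀ f : Ad d, (x - h) (ι f) = 0 := by
    intro f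
    have hfM : f ∈ S.M k := by rw [hk]; trivial
    induction hfM using Submodule.span_induction with
    | mem a ha => exact hf a ha
    | zero => rw [map_zero, map_zero]
    | add a b _ _ ha hb => rw [map_add, map_add, ha, hb, add_zero]
    | smul b a _ ha => rw [Subalgebra.smul_def, smul_eq_mul, map_mul, hxB, ha, mul_zero]
  have hxh : x - h = 0 := by
    ext z
    obtain ⟨a, b, hb, rfl⟩ := IsFractionRing.div_surjective (A := Ad d) z
    have hb0 : b ≠ 0 := nonZeroDivisors.ne_zero hb
    have := S.finite
    have := Fintype.ofFinite S.Γ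
    have hN0 : (∏ g : S.Γ, glAct (g : GL (Fin d) ℂ) b) ≠ 0 := by
      rw [Finset.prod_ne_zero_iff]
      intro g _ h0
      have h1 := hψ g b
      rw [h0, map_zero, map_eq_zero_iff _ (ψ g).injective, map_eq_zero_iff _ hinj] at h1
      exact hb0 h1
    obtain ⟨c, hc⟩ : b ∣ ∏ g : S.Γ, glAct (g : GL (Fin d) ℂ) b := by
      have := Finset.dvd_prod_of_mem (fun g : S.Γ => glAct (g : GL (Fin d) ℂ) b)
        (Finset.mem_univ 1)
      simpa only [OneMemClass.coe_one, glAct_one] using this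
    have h2 := hxB ⟨_, S.prod_fix b⟩ (ι a / ι b)
    have hb1 : ι b ≠ 0 := by rwa [Ne, map_eq_zero_iff ι hinj]
    have h3 : ι (∏ g : S.Γ, glAct (g : GL (Fin d) ℂ) b) * (ι a / ι b) = ι (c * a) := by
      rw [hc, map_mul, map_mul]
      rw [mul_assoc, mul_left_comm, mul_div_cancel₀ _ hb1]
    simp only [h3, hz] at h2
    rcases mul_eq_zero.1 h2.symm with h4 | h4
    · exact absurd ((map_eq_zero_iff ι hinj).1 h4) hN0
    · exact h4
  rw [sub_eq_zero.1 hxh]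
  exact hh
end
end

section
/- The m vectors r_0, r_1, …, r_{m−1} are pairwise distinct, and they are exactly the positive roots of the dihedral root system generated by α and β: {r_0, …, r_{m−1}} = { g·α : g ∈ Γ_{α,β} } ∪ { g·β : g ∈ Γ_{α,β} } intersected with the cone { xα + yβ : x ≥ 0, y ≥ 0 }. -/
noncomputable section

open scoped RealInnerProductSpace

/-- Alternating product `x·y·x·⋯` with `m` factors, starting with `x`. -/
def altProd {M : Type*} [Monoid M] (x y : M) : ℕ → M
  | 0 => 1
  | (j + 1) => x * altProd y x j

/-- The Euclidean plane. -/
abbrev E2 := EuclideanSpace ℝ (Fin 2)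

/-- Orthogonal reflection of the plane fixing the hyperplane `α^⊥`. -/
def refl2 (α : E2) : E2 ≃ₗᵢ[ℝ] E2 := Submodule.reflection (ℝ ∙ α)ᗮ

/-- The root sequence `r_0 = α, r_1 = s_α(β), r_2 = s_α s_β(α), …`. -/
def rootSeq (α β : E2) (j : ℕ) : E2 :=
  altProd (refl2 α) (refl2 β) j (if Even j then α else β)

/-- explicit root -/
def Rk (m : ℕ) (α β : E2) (k : ℤ) : E2 :=
  (Real.sin ((k + 1) * (Real.pi / m)) / Real.sin (Real.pi / m)) • α +
    (Real.sin (k * (Real.pi / m)) / Real.sin (Real.pi / m)) • β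

lemma refl2_apply (α v : E2) (hα : ‖α‖ = 1) : refl2 α v = v - (2 * ⟪α, v⟫) • α := by
  unfold refl2
  rw [Submodule.reflection_orthogonal_apply, Submodule.reflection_singleton_apply, hα]
  simp only [mul_smul, two_smul]
  simp

lemma refl2_comb (c : ℝ) (α β : E2) (hα : ‖α‖ = 1) (h : ⟪α, β⟫ = -c) (x y : ℝ) :
    refl2 α (x • α + y • β) = (2 * c * y - x) • α + y • β := by
  rw [refl2_apply _ _ hα, inner_add_right, inner_smul_right, inner_smul_right, h,
    real_inner_self_eq_norm_sq, hα]
  module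

lemma sin_pos_aux (m : ℕ) (hm : 2 ≤ m) : 0 < Real.sin (Real.pi / m) := by
  have hm' : (2 : ℝ) ≤ m := by exact_mod_cast hm
  apply Real.sin_pos_of_pos_of_lt_pi
  · have := Real.pi_pos
    positivity
  · exact div_lt_self Real.pi_pos (by linarith)

lemma Rk_add (m : ℕ) (hm : 2 ≤ m) (α β : E2) (i q : ℤ) :
    Rk m α β (i + q * m) = ((-1 : ℝ) ^ q) • Rk m α β i := by
  have hm0 : (m : ℝ) ≠ 0 := by
    have : m ≠ 0 := by omega
    exact_mod_cast this
  unfold Rk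
  have e1 : (((i + q * m : ℤ) : ℝ) + 1) * (Real.pi / m) =
      (i + 1) * (Real.pi / m) + q * Real.pi := by
    push_cast; field_simp; ring
  have e2 : ((i + q * m : ℤ) : ℝ) * (Real.pi / m) = i * (Real.pi / m) + q * Real.pi := by
    push_cast; field_simp
  rw [e1, e2, Real.sin_add_int_mul_pi, Real.sin_add_int_mul_pi]
  module

lemma refl_a (m : ℕ) (hm : 2 ≤ m) (α β : E2) (hα : ‖α‖ = 1)
    (hαβ : ⟪α, β⟫ = -Real.cos (Real.pi / m)) (k : ℤ) :
    refl2 α (Rk m α β k) = Rk m α β (m - k) := by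
  have hs := (sin_pos_aux m hm).ne'
  have : ((m : ℤ) - k) = -k + 1 * m := by ring
  rw [this, Rk_add m hm]
  unfold Rk
  rw [refl2_comb _ α β hα hαβ]
  have e1 : ((-k : ℤ) : ℝ) * (Real.pi / m) = -(k * (Real.pi / m)) := by push_cast; ring
  have e2 : (((-k : ℤ) : ℝ) + 1) * (Real.pi / m) = -(k * (Real.pi / m)) + Real.pi / m := by
    push_cast; ring
  have e3 : ((k : ℝ) + 1) * (Real.pi / m) = k * (Real.pi / m) + Real.pi / m := by ring
  rw [e1, e2, e3, Real.sin_add, Real.sin_add, Real.sin_neg, Real.cos_neg]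
  generalize Real.sin (k * (Real.pi / m)) = a at *
  generalize Real.cos (k * (Real.pi / m)) = b at *
  module

lemma refl_b (m : ℕ) (hm : 2 ≤ m) (α β : E2) (hβ : ‖β‖ = 1)
    (hαβ : ⟪α, β⟫ = -Real.cos (Real.pi / m)) (k : ℤ) :
    refl2 β (Rk m α β k) = Rk m α β (m - 2 - k) := by
  have hs := (sin_pos_aux m hm).ne'
  have : ((m : ℤ) - 2 - k) = (-k - 2) + 1 * m := by ring
  rw [this, Rk_add m hm]
  unfold Rk
  rw [add_comm (_ • α), refl2_comb _ β α hβ (by rw [real_inner_comm]; exact hαβ)]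
  have e1 : ((-k - 2 : ℤ) : ℝ) * (Real.pi / m) =
      -((k + 1) * (Real.pi / m) + (Real.pi / m)) := by push_cast; ring
  have e2 : (((-k - 2 : ℤ) : ℝ) + 1) * (Real.pi / m) = -((k + 1) * (Real.pi / m)) := by
    push_cast; ring
  have e3 : (k : ℝ) * (Real.pi / m) = (k + 1) * (Real.pi / m) - Real.pi / m := by ring
  rw [e1, e2, e3, Real.sin_neg, Real.sin_neg, Real.sin_add, Real.sin_sub]
  generalize Real.sin ((k + 1) * (Real.pi / m)) = a at *
  generalize Real.cos ((k + 1) * (Real.pi / m)) = b at *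
  module

lemma Rk_zero (m : ℕ) (hm : 2 ≤ m) (α β : E2) : Rk m α β 0 = α := by
  have hs := (sin_pos_aux m hm).ne'
  simp [Rk, hs]

lemma Rk_last (m : ℕ) (hm : 2 ≤ m) (α β : E2) : Rk m α β (m - 1) = β := by
  have hs := (sin_pos_aux m hm).ne'
  have : ((m : ℤ) - 1) = -1 + 1 * m := by ring
  rw [this, Rk_add m hm]
  simp [Rk, hs, neg_div]

lemma alt_eq (m : ℕ) (hm : 2 ≤ m) (α β : E2) (hα : ‖α‖ = 1) (hβ : ‖β‖ = 1)
    (hαβ : ⟪α, β⟫ = -Real.cos (Real.pi / m)) (j : ℕ) :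
    altProd (refl2 α) (refl2 β) j (if Even j then α else β) = Rk m α β j ∧
    altProd (refl2 β) (refl2 α) j (if Even j then β else α) = Rk m α β (m - 1 - j) := by
  induction j with
  | zero => simp [altProd, Rk_zero m hm, Rk_last m hm]
  | succ j ih =>
    obtain ⟨h1, h2⟩ := ih
    have e1 : (if Even (j + 1) then α else β) = if Even j then β else α := by
      by_cases h : Even j <;> simp [h, Nat.even_add_one]
    have e2 : (if Even (j + 1) then β else α) = if Even j then α else β := by
      by_cases h : Even j <;> simp [h, Nat.even_add_one]
    constructor
    · rw [e1]
      change refl2 α (altProd (refl2 β) (refl2 α) j _) = _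
      rw [h2, refl_a m hm α β hα hαβ]
      congr 1; push_cast; ring
    · rw [e2]
      change refl2 β (altProd (refl2 α) (refl2 β) j _) = _
      rw [h1, refl_b m hm α β hβ hαβ]
      congr 1; push_cast; ring

lemma alt_mem {G : Type*} [Group G] (H : Subgroup G) (j : ℕ) :
    ∀ x y : G, x ∈ H → y ∈ H → altProd x y j ∈ H := by
  induction j with
  | zero => intro x y _ _; exact H.one_mem
  | succ j ih => intro x y hx hy; exact H.mul_mem hx (ih y x hy hx)

lemma indep (m : ℕ) (hm : 2 ≤ m) (α β : E2) (hα : ‖α‖ = 1) (hβ : ‖β‖ = 1)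
    (hαβ : ⟪α, β⟫ = -Real.cos (Real.pi / m)) (x y x' y' : ℝ)
    (h : x • α + y • β = x' • α + y' • β) : x = x' ∧ y = y' := by
  have hs := (sin_pos_aux m hm).ne'
  have hba : ⟪β, α⟫ = -Real.cos (Real.pi / m) := by rw [real_inner_comm]; exact hαβ
  have h1 := congrArg (fun v => ⟪α, v⟫) h
  have h2 := congrArg (fun v => ⟪β, v⟫) h
  simp only [inner_add_right, inner_smul_right, hαβ, hba, real_inner_self_eq_norm_sq, hα, hβ]
    at h1 h2
  have hsc := Real.sin_sq_add_cos_sq (Real.pi / m)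
  have hs2 : Real.sin (Real.pi / m) ^ 2 ≠ 0 := pow_ne_zero 2 hs
  generalize Real.sin (Real.pi / m) = s at *
  generalize Real.cos (Real.pi / m) = c at *
  constructor
  · apply mul_left_cancel₀ hs2
    linear_combination h1 + c * h2 + (x - x') * hsc
  · apply mul_left_cancel₀ hs2
    linear_combination h2 + c * h1 + (y - y') * hsc

lemma sin_nonneg_aux (m : ℕ) (hm : 2 ≤ m) (t : ℝ) (h0 : 0 ≤ t) (h1 : t ≤ m) :
    0 ≤ Real.sin (t * (Real.pi / m)) := by
  have hm' : (0 : ℝ) < m := by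
    have : 0 < m := by omega
    exact_mod_cast this
  have := Real.pi_pos
  apply Real.sin_nonneg_of_nonneg_of_le_pi
  · positivity
  · rw [mul_div_assoc', div_le_iff₀ hm']
    nlinarith

lemma orbit_mem (m : ℕ) (hm : 2 ≤ m) (α β : E2) (hα : ‖α‖ = 1) (hβ : ‖β‖ = 1)
    (hαβ : ⟪α, β⟫ = -Real.cos (Real.pi / m)) (g : E2 ≃ₗᵢ[ℝ] E2)
    (hg : g ∈ Subgroup.closure {refl2 α, refl2 β}) :
    (∀ k, ∃ k', g (Rk m α β k) = Rk m α β k') ∧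
    (∀ k, ∃ k', g⁻¹ (Rk m α β k) = Rk m α β k') := by
  induction hg using Subgroup.closure_induction with
  | mem x hx =>
    have hinv : ∀ a : E2, (refl2 a)⁻¹ = refl2 a := fun a => Submodule.reflection_inv
    rcases hx with rfl | rfl
    · rw [hinv]
      exact ⟨fun k => ⟨_, refl_a m hm α β hα hαβ k⟩, fun k => ⟨_, refl_a m hm α β hα hαβ k⟩⟩
    · rw [hinv]
      exact ⟨fun k => ⟨_, refl_b m hm α β hβ hαβ k⟩, fun k => ⟨_, refl_b m hm α β hβ hαβ k⟩⟩
  | one => simp only [inv_one]; exact ⟨fun k => ⟨k, rfl⟩, fun k => ⟨k, rfl⟩⟩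
  | mul x y _ _ hx hy =>
    constructor
    · intro k
      obtain ⟨a, ha⟩ := hy.1 k
      obtain ⟨b, hb⟩ := hx.1 a
      exact ⟨b, by rw [← hb, ← ha]; rfl⟩
    · intro k
      obtain ⟨a, ha⟩ := hx.2 k
      obtain ⟨b, hb⟩ := hy.2 a
      exact ⟨b, by rw [← hb, ← ha, mul_inv_rev]; rfl⟩
  | inv x _ hx => rw [inv_inv]; exact ⟨hx.2, hx.1⟩

lemma det_aux (t a b : ℝ) :
    Real.sin ((a + 1) * t) * Real.sin (b * t) - Real.sin (a * t) * Real.sin ((b + 1) * t)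
      = Real.sin t * Real.sin ((b - a) * t) := by
  have e1 : (a + 1) * t = a * t + t := by ring
  have e2 : (b + 1) * t = b * t + t := by ring
  have e3 : (b - a) * t = b * t - a * t := by ring
  rw [e1, e2, e3, Real.sin_add, Real.sin_add, Real.sin_sub]
  ring

lemma inj_aux (m : ℕ) (hm : 2 ≤ m) (α β : E2) (hα : ‖α‖ = 1) (hβ : ‖β‖ = 1)
    (hαβ : ⟪α, β⟫ = -Real.cos (Real.pi / m)) (j j' : ℕ) (hj' : j' < m)
    (h : Rk m α β j = Rk m α β j') : ¬ j < j' := by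
  intro hlt
  have hs := (sin_pos_aux m hm).ne'
  obtain ⟨h1, h2⟩ := indep m hm α β hα hβ hαβ _ _ _ _ h
  rw [div_left_inj' hs] at h1 h2
  have hd := det_aux (Real.pi / m) (j : ℤ) (j' : ℤ)
  rw [h1, h2, mul_comm, sub_self] at hd
  have hm' : (0 : ℝ) < m := by
    have : 0 < m := by omega
    exact_mod_cast this
  have hpos : 0 < Real.sin ((((j' : ℤ) : ℝ) - ((j : ℤ) : ℝ)) * (Real.pi / m)) := by
    push_cast
    have a1 : (j : ℝ) < j' := by exact_mod_cast hlt
    have a2 : (j' : ℝ) < m := by exact_mod_cast hj'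
    have a3 : (0 : ℝ) ≤ j := Nat.cast_nonneg j
    have := Real.pi_pos
    apply Real.sin_pos_of_pos_of_lt_pi
    · have : (0 : ℝ) < j' - j := by linarith
      positivity
    · rw [mul_div_assoc', div_lt_iff₀ hm']
      nlinarith
  have := mul_pos (sin_pos_aux m hm) hpos
  linarith


/-- If `α, β` are unit vectors with `⟪α, β⟫ = −cos(π/m)`, the vectors
`r_0, …, r_{m−1}` are pairwise distinct and are exactly the positive roots of the dihedral
root system generated by `α` and `β`: the orbit `Γ_{α,β}·{α, β}` intersected with the cone
`{xα + yβ : x, y ≥ 0}`. -/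
theorem rootSeq_eq_positive_roots (m : ℕ) (hm : 2 ≤ m) (α β : E2)
    (hα : ‖α‖ = 1) (hβ : ‖β‖ = 1)
    (hαβ : ⟪α, β⟫ = -Real.cos (Real.pi / m)) :
    (∀ j < m, ∀ j' < m, rootSeq α β j = rootSeq α β j' → j = j') ∧
    {v : E2 | ∃ j < m, v = rootSeq α β j} =
      {v : E2 | ∃ g ∈ Subgroup.closure {refl2 α, refl2 β}, v = g α ∨ v = g β} ∩
        {v : E2 | ∃ x y : ℝ, 0 ≤ x ∧ 0 ≤ y ∧ v = x • α + y • β} := by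
  have hr : ∀ j, rootSeq α β j = Rk m α β j := fun j => (alt_eq m hm α β hα hβ hαβ j).1
  have hs := sin_pos_aux m hm
  refine ⟨?_, ?_⟩
  · intro j hj j' hj' h
    rw [hr, hr] at h
    have h1 := inj_aux m hm α β hα hβ hαβ j j' hj' h
    have h2 := inj_aux m hm α β hα hβ hαβ j' j hj h.symm
    omega
  · ext v
    constructor
    · rintro ⟨j, hj, rfl⟩
      refine ⟨⟨altProd (refl2 α) (refl2 β) j, alt_mem _ j _ _
        (Subgroup.subset_closure (by simp)) (Subgroup.subset_closure (by simp)), ?_⟩, ?_⟩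
      · unfold rootSeq
        by_cases h : Even j <;> simp [h]
      · rw [hr]
        have hj1 : (j : ℝ) + 1 ≤ m := by exact_mod_cast hj
        have hj0 : (0 : ℝ) ≤ j := Nat.cast_nonneg j
        refine ⟨_, _, ?_, ?_, rfl⟩
        · exact div_nonneg (sin_nonneg_aux m hm _ (by push_cast; linarith)
            (by push_cast; linarith)) hs.le
        · exact div_nonneg (sin_nonneg_aux m hm _ (by push_cast; linarith)
            (by push_cast; linarith)) hs.le
    · rintro ⟨⟨g, hg, hv⟩, x, y, hx, hy, hxy⟩
      have hk : ∃ k, v = Rk m α β k := by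
        have ho := (orbit_mem m hm α β hα hβ hαβ g hg).1
        rcases hv with rfl | rfl
        · obtain ⟨k, hk⟩ := ho 0
          rw [Rk_zero m hm] at hk
          exact ⟨k, hk⟩
        · obtain ⟨k, hk⟩ := ho (m - 1)
          rw [Rk_last m hm] at hk
          exact ⟨k, hk⟩
      obtain ⟨k, hk⟩ := hk
      have hmz : (0 : ℤ) < m := by omega
      have hi0 := Int.emod_nonneg k hmz.ne'
      have hi1 := Int.emod_lt_of_pos k hmz
      have hdec : k = k % m + (k / m) * m := by
        have := Int.emod_add_mul_ediv k m
        linarith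
      rw [hdec, Rk_add m hm] at hk
      generalize k / m = q at *
      generalize k % m = i at *
      lift i to ℕ using hi0
      have him : i < m := by exact_mod_cast hi1
      rcases Int.even_or_odd q with hq | hq
      · rw [hq.neg_one_zpow, one_smul] at hk
        exact ⟨i, him, by rw [hr]; exact hk⟩
      · exfalso
        rw [hq.neg_one_zpow, hxy] at hk
        unfold Rk at hk
        rw [smul_add, smul_smul, smul_smul] at hk
        obtain ⟨h1, h2⟩ := indep m hm α β hα hβ hαβ _ _ _ _ hk
        have hj1 : (i : ℝ) + 1 ≤ m := by exact_mod_cast him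
        have hj0 : (0 : ℝ) ≤ i := Nat.cast_nonneg i
        have p1 := sin_nonneg_aux m hm ((i : ℤ) + 1) (by push_cast; linarith)
          (by push_cast; linarith)
        have p2 := sin_nonneg_aux m hm (i : ℤ) (by push_cast; linarith)
          (by push_cast; linarith)
        have q1 := div_nonneg p1 hs.le
        have q2 := div_nonneg p2 hs.le
        have z1 : Real.sin ((((i : ℤ) : ℝ) + 1) * (Real.pi / m)) / Real.sin (Real.pi / m) = 0 := by
          linarith
        have z2 : Real.sin (((i : ℤ) : ℝ) * (Real.pi / m)) / Real.sin (Real.pi / m) = 0 := by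
          linarith
        rw [div_eq_zero_iff, or_iff_left hs.ne'] at z1 z2
        have e : Real.pi / m = (((i : ℤ) : ℝ) + 1) * (Real.pi / m) - ((i : ℤ) : ℝ) * (Real.pi / m) := by
          ring
        rw [e, Real.sin_sub, z1, z2] at hs
        simp at hs
end
end
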